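/- arXiv:1903.11859 — 6 statements merged into one kernel-verified Lean document; each statement's English description precedes it below -/
import Mathlib

section
/- Let H be a real inner product space, let a > 0, Δt > 0, and a_0 be real numbers with a_0 ≥ a/2 and a_0 ≠ a. Let (u^n)_{n≥0} and (q^n)_{n≥0} be sequences in H such that for every n ≥ 0 the identity ⟨u^{n+1} − u^n, u^{n+1}⟩ = −(a − a_0)·Δt·⟨q^n, q^{n+1}⟩ − a_0·Δt·‖q^{n+1}‖² holds. Then for every n ≥ 0, ‖u^n‖² + a_0·Δt·‖q^n‖² ≤ ‖u^0‖² + a_0·Δt·‖q^0‖². -/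
open RealInnerProductSpace

/-!
The implicit test function gives `‖uⁿ⁺¹‖² - ‖uⁿ‖² + ‖uⁿ⁺¹ - uⁿ‖² = 2⟪uⁿ⁺¹ - uⁿ, uⁿ⁺¹⟫`. The scheme
turns the right-hand side into the dissipation `-2 a₀ Δt ‖qⁿ⁺¹‖²` plus a cross term with coefficient
`2 (a₀ - a) Δt`. Since `0 ≤ a ≤ 2 a₀` means `|a₀ - a| ≤ a₀`, Young's inequality bounds the cross
term by `a₀ Δt (‖qⁿ‖² + ‖qⁿ⁺¹‖²)`, leaving `a₀ Δt (‖qⁿ‖² - ‖qⁿ⁺¹‖²)`.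
-/

section

variable {E F : Type*} [SeminormedAddCommGroup E] [InnerProductSpace ℝ E]
  [SeminormedAddCommGroup F] [InnerProductSpace ℝ F]

theorem norm_sq_sub_norm_sq_le_two_mul_inner_sub_left (x y : E) :
    ‖y‖ ^ 2 - ‖x‖ ^ 2 ≤ 2 * ⟪y - x, y⟫ := by
  have hsq : ‖y - x‖ ^ 2 = ‖y‖ ^ 2 - 2 * ⟪y, x⟫ + ‖x‖ ^ 2 := norm_sub_sq_real y x
  rw [inner_sub_left, real_inner_self_eq_norm_sq, real_inner_comm]
  linarith [sq_nonneg ‖y - x‖]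

theorem two_mul_mul_inner_le_of_abs_le {b c : ℝ} (hcb : |c| ≤ b) (x y : E) :
    2 * c * ⟪x, y⟫ ≤ b * (‖x‖ ^ 2 + ‖y‖ ^ 2) := by
  obtain ⟨hneg, hpos⟩ := abs_le.1 hcb
  have hadd : 0 ≤ (b - c) * ‖x + y‖ ^ 2 := mul_nonneg (by linarith) (sq_nonneg _)
  have hsub : 0 ≤ (b + c) * ‖x - y‖ ^ 2 := mul_nonneg (by linarith) (sq_nonneg _)
  rw [norm_add_sq_real] at hadd
  rw [norm_sub_sq_real] at hsub
  linarith

theorem norm_sq_add_mul_norm_sq_le_of_inner_sub_le {b c : ℝ} (hcb : |c| ≤ b) {u u' : E} {q q' : F}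
    (hstep : ⟪u' - u, u'⟫ ≤ c * ⟪q, q'⟫ - b * ‖q'‖ ^ 2) :
    ‖u'‖ ^ 2 + b * ‖q'‖ ^ 2 ≤ ‖u‖ ^ 2 + b * ‖q‖ ^ 2 := by
  suffices ‖u'‖ ^ 2 - ‖u‖ ^ 2 ≤ b * ‖q‖ ^ 2 - b * ‖q'‖ ^ 2 by linarith
  calc
    ‖u'‖ ^ 2 - ‖u‖ ^ 2 ≤ 2 * ⟪u' - u, u'⟫ := norm_sq_sub_norm_sq_le_two_mul_inner_sub_left u u'
    _ ≤ 2 * (c * ⟪q, q'⟫ - b * ‖q'‖ ^ 2) := by gcongr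
    _ = 2 * c * ⟪q, q'⟫ - 2 * b * ‖q'‖ ^ 2 := by ring
    _ ≤ b * (‖q‖ ^ 2 + ‖q'‖ ^ 2) - 2 * b * ‖q'‖ ^ 2 :=
      sub_le_sub_right (two_mul_mul_inner_le_of_abs_le hcb q q') _
    _ = b * ‖q‖ ^ 2 - b * ‖q'‖ ^ 2 := by ring

theorem stmt_2_general {a Δt a₀ : ℝ} (ha : 0 ≤ a) (hΔt : 0 ≤ Δt) (ha₀ : a / 2 ≤ a₀)
    {u : ℕ → E} {q : ℕ → F}
    (hscheme : ∀ n : ℕ,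
      ⟪u (n + 1) - u n, u (n + 1)⟫ ≤
        -((a - a₀) * Δt * ⟪q n, q (n + 1)⟫) - a₀ * Δt * ‖q (n + 1)‖ ^ 2) :
    Antitone fun n ↦ ‖u n‖ ^ 2 + a₀ * Δt * ‖q n‖ ^ 2 := by
  have hcoeff : |a₀ - a| ≤ a₀ := abs_le.2 ⟨by linarith, by linarith⟩
  have hcoeff_mul : |(a₀ - a) * Δt| ≤ a₀ * Δt := by
    rw [abs_mul, abs_of_nonneg hΔt]
    gcongr
  refine antitone_nat_of_succ_le fun n ↦
    norm_sq_add_mul_norm_sq_le_of_inner_sub_le hcoeff_mul ?_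
  linarith [hscheme n]

end

/-- Theorem 3.1: unconditional stability of the first order EIN-LDG scheme,
in abstract energy form. -/
theorem stmt_2 {H : Type*} [NormedAddCommGroup H] [InnerProductSpace ℝ H]
    (a Δt a₀ : ℝ) (ha : 0 < a) (hΔt : 0 < Δt)
    (ha₀ : a₀ ≥ a / 2) (hne : a₀ ≠ a)
    (u q : ℕ → H)
    (hscheme : ∀ n : ℕ,
      ⟪u (n + 1) - u n, u (n + 1)⟫ =
        -((a - a₀) * Δt * ⟪q n, q (n + 1)⟫) - a₀ * Δt * ‖q (n + 1)‖ ^ 2) :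
    ∀ n : ℕ, ‖u n‖ ^ 2 + a₀ * Δt * ‖q n‖ ^ 2 ≤ ‖u 0‖ ^ 2 + a₀ * Δt * ‖q 0‖ ^ 2 := by
  intro n
  exact stmt_2_general ha.le hΔt.le ha₀ (fun k ↦ (hscheme k).le) n.zero_le
end

section
/- Let H be a real inner product space, let a > 0, Δt > 0, and a_0 be real numbers with a_0 ≥ a/2 and a_0 ≠ a. Let (u^n)_{n≥0}, (u^{n,1})_{n≥0}, (q^n)_{n≥0}, (q^{n,1})_{n≥0} be sequences in H such that for every n ≥ 0 the following three identities hold: (i) ½‖u^{n,1}‖² + ½‖u^{n,1} − u^n‖² − ½‖u^n‖² + ½(a − a_0)Δt⟨q^n, q^{n,1}⟩ + ½a_0Δt‖q^{n,1}‖² = 0; (ii) ½‖u^{n+1}‖² + ½‖u^{n+1} − u^{n,1}‖² − ½‖u^{n,1}‖² + (a_0 − a/2)Δt⟨q^n, q^{n+1}⟩ + (a − 3a_0/2)Δt⟨q^{n,1}, q^{n+1}⟩ + ½a_0Δt‖q^{n+1}‖² = 0; (iii) ‖u^{n,1} − u^n‖² + ½(a − a_0)Δt⟨q^n, q^{n,1}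 − q^n⟩ + ½a_0Δt⟨q^{n,1}, q^{n,1} − q^n⟩ = 0. Then for every n ≥ 0, ‖u^n‖² + ½a_0·Δt·‖q^n‖² ≤ ‖u^0‖² + ½a_0·Δt·‖q^0‖². -/
open RealInnerProductSpace

/-!
With `x = (a - a₀) • q + a₀ • q₁` and `y = q₁ - q`, adding the two stage identities shows that one
step lowers the energy by `‖u₁ - u‖² + ‖u' - u₁‖² + Δt * D`, where `D` is a quadratic form in
`(q, q₁, q')`. Completing the square in `q'` leaves a form in `x` and `y` whose coefficients on
`‖x‖²` and `‖y‖²` are nonnegative because `a / 2 ≤ a₀`, so only the cross term `⟪x, y⟫` can be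
harmful. The increment identity says `Δt * ⟪x, y⟫ = -2 * ‖u₁ - u‖²`: it trades the cross term for a
multiple of `‖u₁ - u‖²`, and the total coefficient of `‖u₁ - u‖²` stays nonnegative.
-/

section

variable {V W : Type*} [SeminormedAddCommGroup V] [SeminormedAddCommGroup W] [InnerProductSpace ℝ W]
  {a Δt a₀ : ℝ} {u u₁ u' : V} {q q₁ q' : W}

/-- One time step of the second order EIN-LDG scheme in energy form, from `(u, q)` to `(u', q')`
through the Runge–Kutta stage `(u₁, q₁)`. The gradient variables may live in a space other than that
of the solution, as they do in several space dimensions. -/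
structure IsEINStep (a Δt a₀ : ℝ) (u u₁ u' : V) (q q₁ q' : W) : Prop where
  first_stage :
    (1 / 2) * ‖u₁‖ ^ 2 + (1 / 2) * ‖u₁ - u‖ ^ 2 - (1 / 2) * ‖u‖ ^ 2
      + (1 / 2) * (a - a₀) * Δt * ⟪q, q₁⟫ + (1 / 2) * a₀ * Δt * ‖q₁‖ ^ 2 = 0
  second_stage :
    (1 / 2) * ‖u'‖ ^ 2 + (1 / 2) * ‖u' - u₁‖ ^ 2 - (1 / 2) * ‖u₁‖ ^ 2
      + (a₀ - a / 2) * Δt * ⟪q, q'⟫ + (a - 3 * a₀ / 2) * Δt * ⟪q₁, q'⟫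
      + (1 / 2) * a₀ * Δt * ‖q'‖ ^ 2 = 0
  increment :
    ‖u₁ - u‖ ^ 2 + (1 / 2) * (a - a₀) * Δt * ⟪q, q₁ - q⟫
      + (1 / 2) * a₀ * Δt * ⟪q₁, q₁ - q⟫ = 0

/-- The discrete energy, which the scheme does not increase. -/
noncomputable def einEnergy (Δt a₀ : ℝ) (u : V) (q : W) : ℝ :=
  ‖u‖ ^ 2 + (1 / 2) * a₀ * Δt * ‖q‖ ^ 2

/-- The quadratic form in the gradient variables by which, per unit of time, one step lowers the
energy; it is indefinite in general. -/
noncomputable def einDissipation (a a₀ : ℝ) (q q₁ q' : W) : ℝ :=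
  a₀ / 2 * ‖q‖ ^ 2 + a₀ * ‖q₁‖ ^ 2 + a₀ / 2 * ‖q'‖ ^ 2
    + (a - a₀) * ⟪q, q₁⟫ + (2 * a₀ - a) * ⟪q, q'⟫ + (2 * a - 3 * a₀) * ⟪q₁, q'⟫

-- The multiplier of the inner product on the left is the one for which no cross term of
-- `(a - a₀) • q + a₀ • q₁` and `q₁ - q` is left on the right.
lemma mul_einDissipation_add_inner_eq_sum_of_squares (a a₀ : ℝ) (q q₁ q' : W) :
    a * a₀ * einDissipation a a₀ q q₁ q'
        + (2 * a - 3 * a₀) * (a - 2 * a₀) * ⟪(a - a₀) • q + a₀ • q₁, q₁ - q⟫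
      = a / 2 * ‖a₀ • q' + (2 * a₀ - a) • q + (2 * a - 3 * a₀) • q₁‖ ^ 2
        + (4 * a₀ - a) / 2 * ‖(a - a₀) • q + a₀ • q₁‖ ^ 2
        + 2 * (a - a₀) ^ 2 * (2 * a₀ - a) * ‖q₁ - q‖ ^ 2 := by
  simp only [einDissipation, ← real_inner_self_eq_norm_sq, inner_add_left, inner_add_right,
    inner_sub_left, inner_sub_right, real_inner_smul_left, real_inner_smul_right,
    real_inner_comm q q₁, real_inner_comm q q', real_inner_comm q₁ q']
  ring

lemma mul_einDissipation_add_inner_nonneg (ha : 0 ≤ a) (ha₀ : a / 2 ≤ a₀) (q q₁ q' : W) :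
    0 ≤ a * a₀ * einDissipation a a₀ q q₁ q'
      + (2 * a - 3 * a₀) * (a - 2 * a₀) * ⟪(a - a₀) • q + a₀ • q₁, q₁ - q⟫ := by
  have h2 : 0 ≤ 2 * a₀ - a := by linarith
  have h4 : 0 ≤ 4 * a₀ - a := by linarith
  rw [mul_einDissipation_add_inner_eq_sum_of_squares]
  positivity

namespace IsEINStep

lemma energy_balance (h : IsEINStep a Δt a₀ u u₁ u' q q₁ q') :
    einEnergy Δt a₀ u' q' + ‖u₁ - u‖ ^ 2 + ‖u' - u₁‖ ^ 2 + Δt * einDissipation a a₀ q q₁ q'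
      = einEnergy Δt a₀ u q := by
  unfold einEnergy einDissipation
  linear_combination 2 * h.first_stage + 2 * h.second_stage

lemma mul_inner_increment (h : IsEINStep a Δt a₀ u u₁ u' q q₁ q') :
    Δt * ⟪(a - a₀) • q + a₀ • q₁, q₁ - q⟫ = -2 * ‖u₁ - u‖ ^ 2 := by
  rw [inner_add_left, real_inner_smul_left, real_inner_smul_left]
  linear_combination 2 * h.increment

lemma le_mul_einDissipation (h : IsEINStep a Δt a₀ u u₁ u' q q₁ q') (ha : 0 ≤ a) (hΔt : 0 ≤ Δt)
    (ha₀ : a / 2 ≤ a₀) :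
    2 * (2 * a - 3 * a₀) * (a - 2 * a₀) * ‖u₁ - u‖ ^ 2
      ≤ a * a₀ * (Δt * einDissipation a a₀ q q₁ q') := by
  have hform := mul_nonneg hΔt (mul_einDissipation_add_inner_nonneg ha ha₀ q q₁ q')
  linear_combination hform + (2 * a - 3 * a₀) * (a - 2 * a₀) * h.mul_inner_increment

lemma einEnergy_le (h : IsEINStep a Δt a₀ u u₁ u' q q₁ q') (ha : 0 < a) (hΔt : 0 ≤ Δt)
    (ha₀ : a / 2 ≤ a₀) :
    einEnergy Δt a₀ u' q' ≤ einEnergy Δt a₀ u q := by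
  have haa₀ : 0 < a * a₀ := mul_pos ha (by linarith)
  have hcoeff : 0 ≤ a * a₀ + 2 * (2 * a - 3 * a₀) * (a - 2 * a₀) := by
    linear_combination sq_nonneg (8 * a - 13 * a₀) / 16 + 23 / 16 * sq_nonneg a₀
  have hfirst := mul_nonneg hcoeff (sq_nonneg ‖u₁ - u‖)
  have hsecond := mul_nonneg haa₀.le (sq_nonneg ‖u' - u₁‖)
  refine le_of_mul_le_mul_left ?_ haa₀
  linear_combination
    hfirst + hsecond + h.le_mul_einDissipation ha.le hΔt ha₀ + a * a₀ * h.energy_balance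

end IsEINStep

theorem stmt_3_general {u u₁ : ℕ → V} {q q₁ : ℕ → W} (ha : 0 < a) (hΔt : 0 ≤ Δt)
    (ha₀ : a / 2 ≤ a₀)
    (h : ∀ n, IsEINStep a Δt a₀ (u n) (u₁ n) (u (n + 1)) (q n) (q₁ n) (q (n + 1))) :
    Antitone fun n ↦ einEnergy Δt a₀ (u n) (q n) :=
  antitone_nat_of_succ_le fun n ↦ (h n).einEnergy_le ha hΔt ha₀

end

/-- Theorem 3.2: unconditional stability of the second order EIN-LDG scheme,
in abstract energy form.  Here `u1 n` and `q1 n` denote the intermediate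
Runge–Kutta stage values `u^{n,1}` and `q^{n,1}`. -/
theorem stmt_3 {H : Type*} [NormedAddCommGroup H] [InnerProductSpace ℝ H]
    (a Δt a₀ : ℝ) (ha : 0 < a) (hΔt : 0 < Δt)
    (ha₀ : a₀ ≥ a / 2) (hne : a₀ ≠ a)
    (u u1 q q1 : ℕ → H)
    (hi : ∀ n : ℕ,
      (1 / 2) * ‖u1 n‖ ^ 2 + (1 / 2) * ‖u1 n - u n‖ ^ 2 - (1 / 2) * ‖u n‖ ^ 2
        + (1 / 2) * (a - a₀) * Δt * ⟪q n, q1 n⟫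
        + (1 / 2) * a₀ * Δt * ‖q1 n‖ ^ 2 = 0)
    (hii : ∀ n : ℕ,
      (1 / 2) * ‖u (n + 1)‖ ^ 2 + (1 / 2) * ‖u (n + 1) - u1 n‖ ^ 2
        - (1 / 2) * ‖u1 n‖ ^ 2
        + (a₀ - a / 2) * Δt * ⟪q n, q (n + 1)⟫
        + (a - 3 * a₀ / 2) * Δt * ⟪q1 n, q (n + 1)⟫
        + (1 / 2) * a₀ * Δt * ‖q (n + 1)‖ ^ 2 = 0)
    (hiii : ∀ n : ℕ,
      ‖u1 n - u n‖ ^ 2 + (1 / 2) * (a - a₀) * Δt * ⟪q n, q1 n - q n⟫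
        + (1 / 2) * a₀ * Δt * ⟪q1 n, q1 n - q n⟫ = 0) :
    ∀ n : ℕ,
      ‖u n‖ ^ 2 + (1 / 2) * a₀ * Δt * ‖q n‖ ^ 2 ≤
        ‖u 0‖ ^ 2 + (1 / 2) * a₀ * Δt * ‖q 0‖ ^ 2 :=
  fun n ↦ stmt_3_general ha hΔt.le ha₀ (fun k ↦ ⟨hi k, hii k, hiii k⟩) n.zero_le
end

section
/- Let a > 0 and a_0 be real numbers with a_0 > a/2 and a_0 ≠ a, and set δ = a_0/2. Define the symmetric 3×3 real matrices A = [[δ, (a − a_0)/2, a_0 − a/2], [(a − a_0)/2, a_0, a − 3a_0/2], [a_0 − a/2, a − 3a_0/2, a_0 − δ]] and B = [[(a_0 − a)/2, a/4 − a_0/2, 0], [a/4 − a_0/2, a_0/2, 0], [0, 0, 0]]. Then there exists a real number σ > −1 such that the matrix A + σB is positive definite. -/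
/-!
Positivity of nested principal minors forces positive definiteness over any ordered field: each
bordering step adds a Schur complement of size one, whose sign is a ratio of consecutive minors.

For `A + σ B`, the determinant is a concave quadratic in `σ`. At its vertex `σ*` the determinant is
`(a₀ - a)² (2 a₀ - a) (4 a₀ - a) / (2 a₀)`, and the principal minor on the coordinates `2, 0` is
`(a₀ - a)² (12 a₀ - 5 a) / (4 a)`. As `A + σ B` always has corner entry `a₀ / 2`, all the minors of
the chain `{2} ⊂ {2, 0} ⊂ {2, 0, 1}` are positive at `σ*`. Finally `σ* + 1` has the sign of the
definite form `12 a₀² - 13 a a₀ + 4 a²`.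
-/

section NestedMinors

open Matrix

variable {𝕜 m n : Type*} [Field 𝕜] [StarRing 𝕜]

theorem posDef_fromBlocks_of_posDef_schur [PartialOrder 𝕜] [IsOrderedAddMonoid 𝕜]
    [Fintype m] [DecidableEq m] [Finite n] {A : Matrix m m 𝕜} {B : Matrix m n 𝕜}
    {D : Matrix n n 𝕜} (hA : A.PosDef) (hS : (D - Bᴴ * A⁻¹ * B).PosDef) :
    (fromBlocks A B Bᴴ D).PosDef := by
  have := Fintype.ofFinite n
  let := hA.isUnit.invertible
  refine .of_dotProduct_mulVec_pos ((IsHermitian.fromBlocks₁₁ B D hA.1).2 hS.1) fun v hv ↦ ?_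
  obtain ⟨x, y, rfl⟩ : ∃ x y, v = Sum.elim x y := ⟨_, _, (Sum.elim_comp_inl_inr v).symm⟩
  rw [dotProduct_mulVec, schur_complement_eq₁₁ B D x y hA.1, ← dotProduct_mulVec,
    ← dotProduct_mulVec]
  obtain rfl | hy := eq_or_ne y 0
  · have hx : x ≠ 0 := fun hx ↦ hv (by simp [hx])
    simpa using hA.dotProduct_mulVec_pos hx
  · exact add_pos_of_nonneg_of_pos (hA.posSemidef.dotProduct_mulVec_nonneg _)
      (hS.dotProduct_mulVec_pos hy)

variable [LinearOrder 𝕜] [IsStrictOrderedRing 𝕜] [TrivialStar 𝕜]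

theorem posDef_of_unique_of_det_pos [Unique n] {M : Matrix n n 𝕜} (hdet : 0 < M.det) :
    M.PosDef := by
  rw [det_unique] at hdet
  refine .of_dotProduct_mulVec_pos (Matrix.ext fun i j ↦ ?_) fun x hx ↦ ?_
  · simp [Subsingleton.elim i j]
  · have hx₀ : x default ≠ 0 := fun h ↦ hx (funext fun i ↦ by simp [Unique.eq_default i, h])
    calc 0 < M default default * x default ^ 2 := by positivity
      _ = star x ⬝ᵥ M *ᵥ x := by
        simp only [dotProduct, mulVec, Finset.univ_unique, Finset.sum_singleton, Pi.star_apply,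
          star_trivial]
        ring

theorem posDef_of_posDef_toBlocks₁₁_of_det_pos [Fintype m] [DecidableEq m] [Unique n]
    [DecidableEq n] {M : Matrix (m ⊕ n) (m ⊕ n) 𝕜} (hM : M.IsHermitian)
    (hA : M.toBlocks₁₁.PosDef) (hdetA : 0 < M.toBlocks₁₁.det) (hdet : 0 < M.det) :
    M.PosDef := by
  obtain ⟨A, B, C, D, rfl⟩ : ∃ A B C D, M = fromBlocks A B C D :=
    ⟨_, _, _, _, (fromBlocks_toBlocks M).symm⟩
  obtain ⟨-, rfl, -⟩ := isHermitian_fromBlocks_iff.1 hM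
  rw [toBlocks_fromBlocks₁₁] at hA hdetA
  let := hA.isUnit.invertible
  rw [det_fromBlocks₁₁, invOf_eq_nonsing_inv] at hdet
  refine posDef_fromBlocks_of_posDef_schur hA (posDef_of_unique_of_det_pos ?_)
  convert pos_of_mul_pos_right hdet hdetA.le

theorem posDef_of_leading_minors_pos {k : ℕ} {M : Matrix (Fin k) (Fin k) 𝕜} (hM : M.IsHermitian)
    (hminor : ∀ l (hl : l ≤ k), 0 < (M.submatrix (Fin.castLE hl) (Fin.castLE hl)).det) :
    M.PosDef := by
  induction k with
  | zero => exact .of_dotProduct_mulVec_pos hM fun x hx ↦ absurd (Subsingleton.elim x 0) hx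
  | succ k ih =>
    have hlead : (M.submatrix Fin.castSucc Fin.castSucc).PosDef :=
      ih (hM.submatrix _) fun l hl ↦ hminor l (hl.trans k.le_succ)
    let N : Matrix (Fin k ⊕ Fin 1) (Fin k ⊕ Fin 1) 𝕜 := M.submatrix finSumFinEquiv finSumFinEquiv
    have hdet : 0 < N.det := by
      rw [det_submatrix_equiv_self]
      exact hminor (k + 1) le_rfl
    have hN : N.PosDef :=
      posDef_of_posDef_toBlocks₁₁_of_det_pos (hM.submatrix _) hlead (hminor k k.le_succ) hdet
    simpa [N] using hN.submatrix finSumFinEquiv.symm.injective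

theorem posDef_of_nested_minors_pos {k : ℕ} (e : Fin k ≃ n) {M : Matrix n n 𝕜}
    (hM : M.IsHermitian)
    (hminor : ∀ l (hl : l ≤ k),
      0 < (M.submatrix (fun i ↦ e (Fin.castLE hl i)) (fun i ↦ e (Fin.castLE hl i))).det) :
    M.PosDef := by
  have hperm : (M.submatrix e e).PosDef := posDef_of_leading_minors_pos (hM.submatrix e) hminor
  simpa using hperm.submatrix e.symm.injective

end NestedMinors

section EnergyMatrices

variable {𝕜 : Type*} [Field 𝕜]

/-- The matrix `A` of the quadratic form in `(q^n, q^{n,1}, q^{n+1})` in the combined energy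
identity, with `δ = a₀ / 2`. -/
def energyMatrix (a a₀ : 𝕜) : Matrix (Fin 3) (Fin 3) 𝕜 :=
  !![a₀ / 2, (a - a₀) / 2, a₀ - a / 2;
     (a - a₀) / 2, a₀, a - 3 * a₀ / 2;
     a₀ - a / 2, a - 3 * a₀ / 2, a₀ - a₀ / 2]

/-- The matrix `B` of the quadratic form obtained by testing the first stage equation with
`u^{n,1} - u^n`. -/
def stageMatrix (a a₀ : 𝕜) : Matrix (Fin 3) (Fin 3) 𝕜 :=
  !![(a₀ - a) / 2, a / 4 - a₀ / 2, 0;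
     a / 4 - a₀ / 2, a₀ / 2, 0;
     0, 0, 0]

/-- The weight `σ*` at which `det (A + σ B)`, a quadratic polynomial in `σ`, has its vertex. -/
def detMaximizer (a a₀ : 𝕜) : 𝕜 :=
  2 * (2 * a₀ - a) * (3 * a₀ - 2 * a) / (a * a₀)

theorem isHermitian_energyMatrix_add_smul_stageMatrix [StarRing 𝕜] [TrivialStar 𝕜] (a a₀ σ : 𝕜) :
    (energyMatrix a a₀ + σ • stageMatrix a a₀).IsHermitian := by
  ext i j
  fin_cases i <;> fin_cases j <;> simp [energyMatrix, stageMatrix]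

theorem det_energyMatrix_add_smul_stageMatrix [CharZero 𝕜] {a a₀ : 𝕜} (ha : a ≠ 0) (ha₀ : a₀ ≠ 0)
    (σ : 𝕜) :
    (energyMatrix a a₀ + σ • stageMatrix a a₀).det =
      (a₀ - a) ^ 2 * (2 * a₀ - a) * (4 * a₀ - a) / (2 * a₀) -
        a ^ 2 * a₀ / 32 * (σ - detMaximizer a a₀) ^ 2 := by
  rw [Matrix.det_fin_three]
  simp only [Matrix.add_apply, Matrix.smul_apply, smul_eq_mul, energyMatrix, stageMatrix,
    detMaximizer, Matrix.of_apply, Matrix.cons_val]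
  field_simp
  ring

theorem det_submatrix_energyMatrix_add_detMaximizer_smul [CharZero 𝕜] {a a₀ : 𝕜} (ha : a ≠ 0)
    (ha₀ : a₀ ≠ 0) :
    ((energyMatrix a a₀ + detMaximizer a a₀ • stageMatrix a a₀).submatrix ![2, 0] ![2, 0]).det =
      (a₀ - a) ^ 2 * (12 * a₀ - 5 * a) / (4 * a) := by
  rw [Matrix.det_fin_two]
  simp only [Matrix.submatrix_apply, Matrix.add_apply, Matrix.smul_apply, smul_eq_mul,
    energyMatrix, stageMatrix, detMaximizer, Matrix.of_apply, Matrix.cons_val]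
  field_simp
  ring

variable [LinearOrder 𝕜] [IsStrictOrderedRing 𝕜] {a a₀ : 𝕜}

theorem neg_one_lt_detMaximizer (ha : 0 < a) (ha₀ : 0 < a₀) : -1 < detMaximizer a a₀ := by
  have hsq : detMaximizer a a₀ + 1 = ((24 * a₀ - 13 * a) ^ 2 + 23 * a ^ 2) / (48 * (a * a₀)) := by
    rw [detMaximizer]
    field_simp
    ring
  have hpos : 0 < detMaximizer a a₀ + 1 := by
    rw [hsq]
    positivity
  linarith

theorem posDef_energyMatrix_add_detMaximizer_smul [StarRing 𝕜] [TrivialStar 𝕜] (ha : 0 < a)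
    (ha₀ : a / 2 < a₀) (hne : a₀ ≠ a) :
    (energyMatrix a a₀ + detMaximizer a a₀ • stageMatrix a a₀).PosDef := by
  have ha₀_pos : 0 < a₀ := by linarith
  have : a₀ - a ≠ 0 := sub_ne_zero.2 hne
  set M := energyMatrix a a₀ + detMaximizer a a₀ • stageMatrix a a₀ with hM
  have hcorner : 0 < M 2 2 := by
    simpa [hM, energyMatrix, stageMatrix] using ha₀_pos
  have hminor : 0 < (M.submatrix ![2, 0] ![2, 0]).det := by
    rw [det_submatrix_energyMatrix_add_detMaximizer_smul ha.ne' ha₀_pos.ne']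
    have : 0 < 12 * a₀ - 5 * a := by linarith
    positivity
  have hdet : 0 < M.det := by
    rw [det_energyMatrix_add_smul_stageMatrix ha.ne' ha₀_pos.ne', sub_self,
      zero_pow two_ne_zero, mul_zero, sub_zero]
    have : 0 < 2 * a₀ - a := by linarith
    have : 0 < 4 * a₀ - a := by linarith
    positivity
  -- `i ↦ i - 1` enumerates the coordinates in the order `2, 0, 1`.
  let e : Fin 3 ≃ Fin 3 := Equiv.subRight 1
  refine posDef_of_nested_minors_pos e
    (isHermitian_energyMatrix_add_smul_stageMatrix a a₀ _) fun l hl ↦ ?_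
  interval_cases l
  · simp
  · rw [Matrix.det_fin_one]
    exact hcorner
  · convert hminor using 2
    ext i j
    fin_cases i <;> fin_cases j <;> rfl
  · exact (Matrix.det_submatrix_equiv_self e M).symm ▸ hdet

theorem stmt_5_general [StarRing 𝕜] [TrivialStar 𝕜] (ha : 0 < a) (ha₀ : a₀ > a / 2)
    (hne : a₀ ≠ a) :
    ∃ σ : 𝕜, σ > -1 ∧ (energyMatrix a a₀ + σ • stageMatrix a a₀).PosDef :=
  ⟨detMaximizer a a₀, neg_one_lt_detMaximizer ha ((half_pos ha).trans ha₀),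
    posDef_energyMatrix_add_detMaximizer_smul ha ha₀ hne⟩

end EnergyMatrices

/-- Lemma 3.1: existence of `σ > -1` making `A + σ B` positive definite. -/
theorem stmt_5 (a a₀ : ℝ) (ha : 0 < a) (ha₀ : a₀ > a / 2) (hne : a₀ ≠ a) :
    let δ : ℝ := a₀ / 2
    let A : Matrix (Fin 3) (Fin 3) ℝ :=
      !![δ, (a - a₀) / 2, a₀ - a / 2;
         (a - a₀) / 2, a₀, a - 3 * a₀ / 2;
         a₀ - a / 2, a - 3 * a₀ / 2, a₀ - δ]
    let B : Matrix (Fin 3) (Fin 3) ℝ :=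
      !![(a₀ - a) / 2, a / 4 - a₀ / 2, 0;
         a / 4 - a₀ / 2, a₀ / 2, 0;
         0, 0, 0]
    ∃ σ : ℝ, σ > -1 ∧ (A + σ • B).PosDef :=
  stmt_5_general ha ha₀ hne
end

section
/- Let θ be a real number with θ > 1/2 and θ ≠ 1. Then there exists a real number σ > −1 satisfying simultaneously: σ(θ − 1) + θ > 0; −σ²/4 + (θ² + θ − 1)σ + θ² + 2θ − 1 > 0; and −θσ²/4 + (6θ² − 7θ + 2)σ − (4θ³ + 4θ² − 11θ + 4) > 0. -/
/-!
The third minor degenerates to `-(σ - 2) ^ 2 / 4` at `θ = 1` and to `-σ ^ 2 / 8` at `θ = 1 / 2`, so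
a choice of `σ` continuous in `θ` has to tend to `2` at the former and to `0` at the latter. The
linear function with these values is `σ = 4 * θ - 2`, and for it all three minors become manifestly
positive.
-/

theorem stmt_7_general {K : Type*} [Field K] [LinearOrder K] [IsStrictOrderedRing K]
    (θ : K) (hθ : θ > 1 / 2) (hθ1 : θ ≠ 1) :
    ∃ σ : K, σ > -1 ∧
      σ * (θ - 1) + θ > 0 ∧
      -σ ^ 2 / 4 + (θ ^ 2 + θ - 1) * σ + θ ^ 2 + 2 * θ - 1 > 0 ∧
      -θ * σ ^ 2 / 4 + (6 * θ ^ 2 - 7 * θ + 2) * σ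
        - (4 * θ ^ 3 + 4 * θ ^ 2 - 11 * θ + 4) > 0 := by
  refine ⟨4 * θ - 2, by linarith, ?_, ?_, ?_⟩
  · calc (4 * θ - 2) * (θ - 1) + θ
      _ = (2 * θ - 5 / 4) ^ 2 + 7 / 16 := by ring
      _ > 0 := by positivity
  · calc -(4 * θ - 2) ^ 2 / 4 + (θ ^ 2 + θ - 1) * (4 * θ - 2) + θ ^ 2 + 2 * θ - 1
      _ = θ ^ 2 * (4 * θ - 1) := by ring
      _ > 0 := mul_pos (pow_pos (by linarith) 2) (by linarith)
  · have hsq : 0 < (θ - 1) ^ 2 := sq_pos_of_ne_zero (sub_ne_zero.mpr hθ1)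
    calc -θ * (4 * θ - 2) ^ 2 / 4 + (6 * θ ^ 2 - 7 * θ + 2) * (4 * θ - 2)
          - (4 * θ ^ 3 + 4 * θ ^ 2 - 11 * θ + 4)
      _ = 8 * (θ - 1) ^ 2 * (2 * θ - 1) := by ring
      _ > 0 := mul_pos (mul_pos (by norm_num) hsq) (by linarith)

/-- Core computational claim in the proof of Lemma 3.1: for every `θ > 1/2`,
`θ ≠ 1`, there exists `σ > -1` satisfying the three leading-minor inequalities. -/
theorem stmt_7 (θ : ℝ) (hθ : θ > 1 / 2) (hθ1 : θ ≠ 1) :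
    ∃ σ : ℝ, σ > -1 ∧
      σ * (θ - 1) + θ > 0 ∧
      -σ ^ 2 / 4 + (θ ^ 2 + θ - 1) * σ + θ ^ 2 + 2 * θ - 1 > 0 ∧
      -θ * σ ^ 2 / 4 + (6 * θ ^ 2 - 7 * θ + 2) * σ
        - (4 * θ ^ 3 + 4 * θ ^ 2 - 11 * θ + 4) > 0 :=
  stmt_7_general θ hθ hθ1
end

section
/- For a real number θ > 1/2 with θ ≠ 1, set Δ₁ = θ⁴ + 2θ³ and Δ₂ = 32θ⁴ − 88θ³ + 84θ² − 32θ + 4, and define A₁ = 2(θ² + θ − 1) − 2√Δ₁, A₂ = 2(θ² + θ − 1) + 2√Δ₁, B₁ = (2(6θ² − 7θ + 2) − 2√Δ₂)/θ, B₂ = (2(6θ² − 7θ + 2) + 2√Δ₂)/θ. Then (A₁ − B₂)(A₂ − B₁) < 0, and hence the open intervals (A₁, A₂) and (B₁, B₂) have nonempty intersection, i.e. max{A₁, B₁} < min{A₂, B₂}. -/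
/-!
The product `(A₁ - B₂) * (A₂ - B₁)` is the square of the distance between the centres of the two
intervals minus the square of the sum of their radii. Expanding, the squared radicals are replaced
by polynomials in `θ` and only the mixed term `√Δ₁ * √Δ₂` survives, so the product equals `-4 / θ`
times a sum whose polynomial part is positive for `θ > 1 / 2`. Both intervals are nondegenerate,
which makes `A₁ - B₂` the smaller factor: it is negative, and `A₂ - B₁` is positive.
-/

theorem max_lt_min_of_mul_sub_neg {R : Type*} [Ring R] [LinearOrder R] [IsStrictOrderedRing R]
    {a₁ a₂ b₁ b₂ : R} (ha : a₁ < a₂) (hb : b₁ < b₂) (h : (a₁ - b₂) * (a₂ - b₁) < 0) :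
    max a₁ b₁ < min a₂ b₂ := by
  have factor_lt : a₁ - b₂ < a₂ - b₁ := sub_lt_sub ha hb
  obtain ⟨hpos, hneg⟩ | ⟨hneg, hpos⟩ := mul_neg_iff.mp h
  · exact absurd (hneg.trans hpos) factor_lt.not_gt
  · exact max_lt (lt_min ha (sub_neg.mp hneg)) (lt_min (sub_pos.mp hpos) hb)

namespace SigmaInterval

section Ring

variable {R : Type*} [CommRing R]

/-- The discriminant `Δ₁` of `-σ² / 4 + (θ² + θ - 1) σ + θ² + 2 θ - 1` as a quadratic in `σ`,
whose roots are `A₁` and `A₂`. -/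
def discrimA (θ : R) : R := θ ^ 4 + 2 * θ ^ 3

/-- The discriminant `Δ₂` of `-θ σ² / 4 + (6 θ² - 7 θ + 2) σ - (4 θ³ + 4 θ² - 11 θ + 4)` as a
quadratic in `σ`, whose roots are `B₁` and `B₂`. -/
def discrimB (θ : R) : R := 32 * θ ^ 4 - 88 * θ ^ 3 + 84 * θ ^ 2 - 32 * θ + 4

/-- The polynomial accompanying `2 √Δ₁ √Δ₂` in the product `(A₁ - B₂) (A₂ - B₁)`,
normalised by the factor `-4 / θ`. -/
def polynomialPart (θ : R) : R := 12 * θ ^ 4 - 5 * θ ^ 3 - 24 * θ ^ 2 + 28 * θ - 8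

theorem discrimB_eq_mul (θ : R) :
    discrimB θ = 4 * (θ - 1) ^ 2 * ((2 * θ - 1) * (4 * θ - 1)) := by
  unfold discrimB
  ring

theorem eight_mul_polynomialPart (θ : R) :
    8 * polynomialPart θ = 6 * (2 * θ - 1) ^ 4 +
      (2 * θ - 1) * (19 * (2 * θ - 1) ^ 2 - 27 * (2 * θ - 1) + 25) + 1 := by
  unfold polynomialPart
  ring

variable [LinearOrder R] [IsStrictOrderedRing R] {θ : R}

theorem discrimA_pos (hθ : 0 < θ) : 0 < discrimA θ := by
  unfold discrimA
  positivity

theorem discrimB_pos (hθ : 1 < 2 * θ) (hθ1 : θ ≠ 1) : 0 < discrimB θ := by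
  have hsq : 0 < (θ - 1) ^ 2 := sq_pos_of_ne_zero (sub_ne_zero.mpr hθ1)
  rw [discrimB_eq_mul]
  exact mul_pos (mul_pos four_pos hsq) (mul_pos (by linarith) (by linarith))

theorem polynomialPart_pos (hθ : 1 < 2 * θ) : 0 < polynomialPart θ := by
  have hx : 0 < 2 * θ - 1 := sub_pos.mpr hθ
  have hquad (x : R) : 0 < 19 * x ^ 2 - 27 * x + 25 := by
    linarith [sq_nonneg (38 * x - 27)]
  have hmul : 0 < 8 * polynomialPart θ := by
    rw [eight_mul_polynomialPart]
    linarith [pow_pos hx 4, mul_pos hx (hquad (2 * θ - 1))]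
  linarith

end Ring

theorem endpoint_mul_eq {K : Type*} [Field K] {θ r s : K} (hθ : θ ≠ 0)
    (hr : r ^ 2 = discrimA θ) (hs : s ^ 2 = discrimB θ) :
    ((2 * (θ ^ 2 + θ - 1) - 2 * r) - (2 * (6 * θ ^ 2 - 7 * θ + 2) + 2 * s) / θ) *
        ((2 * (θ ^ 2 + θ - 1) + 2 * r) - (2 * (6 * θ ^ 2 - 7 * θ + 2) - 2 * s) / θ) =
      -(4 / θ * (2 * (r * s) + polynomialPart θ)) := by
  unfold discrimA at hr
  unfold discrimB at hs
  unfold polynomialPart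
  calc
    _ = (2 * (θ ^ 2 + θ - 1) - 2 * (6 * θ ^ 2 - 7 * θ + 2) / θ) ^ 2 -
          (2 * r + 2 * s / θ) ^ 2 := by ring
    _ = _ := by
      field_simp
      linear_combination (-4 * θ ^ 2) * hr - 4 * hs

end SigmaInterval

open SigmaInterval

/-- The two open σ-intervals in the proof of Lemma 3.1 intersect. -/
theorem stmt_9 (θ : ℝ) (hθ : θ > 1 / 2) (hθ1 : θ ≠ 1) :
    let Δ₁ : ℝ := θ ^ 4 + 2 * θ ^ 3
    let Δ₂ : ℝ := 32 * θ ^ 4 - 88 * θ ^ 3 + 84 * θ ^ 2 - 32 * θ + 4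
    let A₁ : ℝ := 2 * (θ ^ 2 + θ - 1) - 2 * Real.sqrt Δ₁
    let A₂ : ℝ := 2 * (θ ^ 2 + θ - 1) + 2 * Real.sqrt Δ₁
    let B₁ : ℝ := (2 * (6 * θ ^ 2 - 7 * θ + 2) - 2 * Real.sqrt Δ₂) / θ
    let B₂ : ℝ := (2 * (6 * θ ^ 2 - 7 * θ + 2) + 2 * Real.sqrt Δ₂) / θ
    (A₁ - B₂) * (A₂ - B₁) < 0 ∧ max A₁ B₁ < min A₂ B₂ := by
  intro Δ₁ Δ₂ A₁ A₂ B₁ B₂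
  have hθ0 : 0 < θ := by linarith
  have hθ2 : 1 < 2 * θ := by linarith
  have hΔ₁ : 0 < Δ₁ := discrimA_pos hθ0
  have hΔ₂ : 0 < Δ₂ := discrimB_pos hθ2 hθ1
  have hr : 0 < √Δ₁ := Real.sqrt_pos.mpr hΔ₁
  have hs : 0 < √Δ₂ := Real.sqrt_pos.mpr hΔ₂
  have hA : A₁ < A₂ := by linarith
  have hB : B₁ < B₂ := div_lt_div_of_pos_right (by linarith) hθ0
  have hneg : (A₁ - B₂) * (A₂ - B₁) < 0 := by
    have hpoly : 0 < polynomialPart θ := polynomialPart_pos hθ2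
    calc
      _ = -(4 / θ * (2 * (√Δ₁ * √Δ₂) + polynomialPart θ)) :=
        endpoint_mul_eq hθ0.ne' (Real.sq_sqrt hΔ₁.le) (Real.sq_sqrt hΔ₂.le)
      _ < 0 := neg_neg_of_pos (by positivity)
  exact ⟨hneg, max_lt_min_of_mul_sub_neg hA hB hneg⟩
end

section
/- Let a > 0 and a_0 be real numbers with a_0 > a/2 and a_0 ≠ a, and set δ = a_0/2. Define the symmetric 3×3 real matrices A = [[δ, (a − a_0)/2, a_0 − a/2], [(a − a_0)/2, a_0, a − 3a_0/2], [a_0 − a/2, a − 3a_0/2, a_0 − δ]] and B = [[(a_0 − a)/2, a/4 − a_0/2, 0], [a/4 − a_0/2, a_0/2, 0], [0, 0, 0]]. Then there exist a real number σ > −1 and a real number ε > 0 such that the matrix A + σB − εI₃ is positive definite, where I₃ is the 3×3 identity matrix. -/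
/-! The determinant of `A + σB` is a concave quadratic polynomial in `σ`. At its vertex it is
positive, and so are the last diagonal entry and the principal minor on the first and third
coordinates. Bordering by one coordinate at a time, in the order third, first, second, shows that
`A + σB` is positive definite there. Subtracting `ε` times the identity shifts the eigenvalues by
`-ε`, so half of the smallest eigenvalue may be subtracted. -/

section PosDef

open scoped Matrix ComplexOrder

variable {𝕜 n k : Type*} [RCLike 𝕜] [DecidableEq n]

theorem posDef_iff_forall_mem_spectrum_pos [Fintype n] {M : Matrix n n 𝕜} (hM : M.IsHermitian) :
    M.PosDef ↔ ∀ x ∈ spectrum ℝ M, 0 < x := by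
  rw [hM.posDef_iff_eigenvalues_pos, hM.spectrum_real_eq_range_eigenvalues, Set.forall_mem_range]

theorem posDef_sub_smul_one_iff [Fintype n] {M : Matrix n n 𝕜} (hM : M.IsHermitian) (r : ℝ) :
    (M - r • (1 : Matrix n n 𝕜)).PosDef ↔ ∀ i, r < hM.eigenvalues i := by
  have hsub : (M - r • (1 : Matrix n n 𝕜)).IsHermitian :=
    hM.sub (Matrix.isHermitian_one.smul (.all r))
  rw [posDef_iff_forall_mem_spectrum_pos hsub, ← Algebra.algebraMap_eq_smul_one,
    ← spectrum.sub_singleton_eq, hM.spectrum_real_eq_range_eigenvalues]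
  simp

theorem exists_pos_posDef_sub_smul_one [Finite n] {M : Matrix n n 𝕜} (hM : M.PosDef) :
    ∃ ε : ℝ, ε > 0 ∧ (M - ε • (1 : Matrix n n 𝕜)).PosDef := by
  cases nonempty_fintype n
  cases isEmpty_or_nonempty n
  · exact ⟨1, one_pos, (posDef_sub_smul_one_iff hM.isHermitian 1).2 isEmptyElim⟩
  · obtain ⟨i₀, hmin⟩ := Finite.exists_min hM.isHermitian.eigenvalues
    have hpos := hM.eigenvalues_pos i₀
    exact ⟨hM.isHermitian.eigenvalues i₀ / 2, half_pos hpos,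
      (posDef_sub_smul_one_iff _ _).2 fun i => (half_lt_self hpos).trans_le (hmin i)⟩

theorem posDef_fromBlocks_of_det_pos [Fintype n] [Unique k] [Fintype k] [DecidableEq k]
    {A : Matrix n n 𝕜} (hA : A.PosDef) (B : Matrix n k 𝕜) (D : Matrix k k 𝕜)
    (hdet : 0 < (Matrix.fromBlocks A B Bᴴ D).det) : (Matrix.fromBlocks A B Bᴴ D).PosDef := by
  let _ : Invertible A := hA.isUnit.invertible
  have hschur : 0 < (D - Bᴴ * A⁻¹ * B).det := by
    rw [Matrix.det_fromBlocks₁₁, Matrix.invOf_eq_nonsing_inv] at hdet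
    exact pos_of_mul_pos_right hdet hA.det_pos.le
  have hdiag : D - Bᴴ * A⁻¹ * B =
      Matrix.diagonal fun _ => (D - Bᴴ * A⁻¹ * B) default default := by
    ext i j
    simp [Subsingleton.elim i default, Subsingleton.elim j default]
  have hschur_posSemidef : (D - Bᴴ * A⁻¹ * B).PosSemidef := by
    rw [Matrix.det_unique] at hschur
    rw [hdiag]
    exact .diagonal fun _ => hschur.le
  exact ((hA.fromBlocks₁₁ B D).2 hschur_posSemidef).posDef_iff_det_ne_zero.2 hdet.ne'

theorem posDef_of_posDef_submatrix_succAbove {d : ℕ} {M : Matrix (Fin (d + 1)) (Fin (d + 1)) 𝕜}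
    (hM : M.IsHermitian) (p : Fin (d + 1))
    (hminor : (M.submatrix p.succAbove p.succAbove).PosDef) (hdet : 0 < M.det) : M.PosDef := by
  let e : Fin d ⊕ Unit ≃ Fin (d + 1) :=
    (Equiv.optionEquivSumPUnit (Fin d)).symm.trans (finSuccEquiv' p).symm
  let N := M.submatrix e e
  have hinl : N.toBlocks₁₁ = M.submatrix p.succAbove p.succAbove := by
    ext i j
    simp [N, e, Matrix.toBlocks₁₁]
  have hN : Matrix.fromBlocks N.toBlocks₁₁ N.toBlocks₁₂ N.toBlocks₁₂ᴴ N.toBlocks₂₂ = N := by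
    convert N.fromBlocks_toBlocks using 2
    ext i j
    exact hM.apply _ _
  have hN_posDef : N.PosDef := by
    rw [← hN]
    refine posDef_fromBlocks_of_det_pos (hinl ▸ hminor) _ _ ?_
    rwa [hN, Matrix.det_submatrix_equiv_self]
  simpa [N] using hN_posDef.submatrix e.symm.injective

theorem posDef_fin_three_of_nested_minors_pos {M : Matrix (Fin 3) (Fin 3) 𝕜}
    (hM : M.IsHermitian) (h₁ : 0 < M 2 2)
    (h₂ : 0 < (M.submatrix ![0, 2] ![0, 2]).det) (h₃ : 0 < M.det) : M.PosDef := by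
  have hsuccAbove : Fin.succAbove (1 : Fin 3) = ![0, 2] := by decide
  refine posDef_of_posDef_submatrix_succAbove hM 1 ?_ h₃
  rw [hsuccAbove]
  refine posDef_of_posDef_submatrix_succAbove (hM.submatrix _) 0 ?_ h₂
  refine posDef_of_posDef_submatrix_succAbove ((hM.submatrix _).submatrix _) 0 ?_ ?_
  · exact ⟨Subsingleton.elim _ _, fun x hx => (hx (Subsingleton.elim _ _)).elim⟩
  · rwa [Matrix.det_fin_one]

end PosDef

/-- The matrix `A + σB` of the paper, written out entrywise with `δ = a₀ / 2`. -/
noncomputable def shiftedMatrix (a a₀ σ : ℝ) : Matrix (Fin 3) (Fin 3) ℝ :=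
  !![a₀ / 2 + σ * ((a₀ - a) / 2), (a - a₀) / 2 + σ * (a / 4 - a₀ / 2), a₀ - a / 2;
     (a - a₀) / 2 + σ * (a / 4 - a₀ / 2), a₀ + σ * (a₀ / 2), a - 3 * a₀ / 2;
     a₀ - a / 2, a - 3 * a₀ / 2, a₀ / 2]

/-- The vertex of the quadratic polynomial `σ ↦ det (A + σB)` for `a, a₀ ≠ 0`, used as the witness
`σ`. -/
noncomputable def optimalShift (a a₀ : ℝ) : ℝ :=
  2 * (2 * a₀ - a) * (3 * a₀ - 2 * a) / (a * a₀)

section ShiftedMatrix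

variable {a a₀ : ℝ}

theorem isHermitian_shiftedMatrix (a a₀ σ : ℝ) : (shiftedMatrix a a₀ σ).IsHermitian := by
  ext i j
  fin_cases i <;> fin_cases j <;> rfl

theorem det_shiftedMatrix (ha : a ≠ 0) (ha₀ : a₀ ≠ 0) (σ : ℝ) :
    (shiftedMatrix a a₀ σ).det =
      (2 * a₀ - a) * (a₀ - a) ^ 2 * (4 * a₀ - a) / (2 * a₀) -
        a ^ 2 * a₀ / 32 * (σ - optimalShift a a₀) ^ 2 := by
  simp only [Matrix.det_fin_three, shiftedMatrix, optimalShift, Matrix.of_apply, Matrix.cons_val]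
  field_simp
  ring

theorem det_submatrix_shiftedMatrix_optimalShift (ha : a ≠ 0) (ha₀ : a₀ ≠ 0) :
    ((shiftedMatrix a a₀ (optimalShift a a₀)).submatrix ![0, 2] ![0, 2]).det =
      (a₀ - a) ^ 2 * (12 * a₀ - 5 * a) / (4 * a) := by
  simp only [Matrix.det_fin_two, Matrix.submatrix_apply, shiftedMatrix, optimalShift,
    Matrix.of_apply, Matrix.cons_val]
  field_simp
  ring

theorem neg_one_lt_optimalShift (ha : 0 < a) (ha₀ : 0 < a₀) : -1 < optimalShift a a₀ := by
  have hsq : optimalShift a a₀ + 1 =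
      ((24 * a₀ - 13 * a) ^ 2 + 23 * a ^ 2) / (48 * (a * a₀)) := by
    rw [optimalShift]
    field_simp
    ring
  rw [neg_lt_iff_pos_add, hsq]
  positivity

theorem posDef_shiftedMatrix_optimalShift (ha : 0 < a) (ha₀ : a / 2 < a₀) (hne : a₀ ≠ a) :
    (shiftedMatrix a a₀ (optimalShift a a₀)).PosDef := by
  have ha₀_pos : 0 < a₀ := by linarith
  have : 0 < (a₀ - a) ^ 2 := sq_pos_of_ne_zero (sub_ne_zero.2 hne)
  refine posDef_fin_three_of_nested_minors_pos (isHermitian_shiftedMatrix _ _ _)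
    (half_pos ha₀_pos) ?_ ?_
  · rw [det_submatrix_shiftedMatrix_optimalShift ha.ne' ha₀_pos.ne']
    have : 0 < 12 * a₀ - 5 * a := by linarith
    positivity
  · rw [det_shiftedMatrix ha.ne' ha₀_pos.ne', sub_self, zero_pow two_ne_zero, mul_zero, sub_zero]
    have : 0 < 2 * a₀ - a := by linarith
    have : 0 < 4 * a₀ - a := by linarith
    positivity

end ShiftedMatrix

/-- Perturbed version of Lemma 3.1 used in the error estimates of Section 4:
`A + σB - εI₃` is positive definite for some `σ > -1` and some `ε > 0`. -/
theorem stmt_14 (a a₀ : ℝ) (ha : 0 < a) (ha₀ : a₀ > a / 2) (hne : a₀ ≠ a) :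
    let δ : ℝ := a₀ / 2
    let A : Matrix (Fin 3) (Fin 3) ℝ :=
      !![δ, (a - a₀) / 2, a₀ - a / 2;
         (a - a₀) / 2, a₀, a - 3 * a₀ / 2;
         a₀ - a / 2, a - 3 * a₀ / 2, a₀ - δ]
    let B : Matrix (Fin 3) (Fin 3) ℝ :=
      !![(a₀ - a) / 2, a / 4 - a₀ / 2, 0;
         a / 4 - a₀ / 2, a₀ / 2, 0;
         0, 0, 0]
    ∃ σ : ℝ, σ > -1 ∧ ∃ ε : ℝ, ε > 0 ∧
      (A + σ • B - ε • (1 : Matrix (Fin 3) (Fin 3) ℝ)).PosDef := by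
  intro δ A B
  have ha₀_pos : 0 < a₀ := by linarith
  have hAB : A + optimalShift a a₀ • B = shiftedMatrix a a₀ (optimalShift a a₀) := by
    ext i j
    fin_cases i <;> fin_cases j <;> simp [A, B, δ, shiftedMatrix, sub_half]
  refine ⟨optimalShift a a₀, neg_one_lt_optimalShift ha ha₀_pos, ?_⟩
  rw [hAB]
  exact exists_pos_posDef_sub_smul_one (posDef_shiftedMatrix_optimalShift ha ha₀ hne)
end
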